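/- arXiv:2006.07138 — 2 statements merged into one kernel-verified Lean document; each statement's English description precedes it below -/
import Mathlib

section
/- Let n ≥ 1, 0 < s < s₀ < 1 and ρ₀ ∈ (0, √(4/5)). There exists a constant C = C(n, s, s₀, ρ₀) > 0 with the following property. Let t ∈ (s, s₀], let M ≥ 1, let 𝒩 ⊆ ℝ^M be any set, and let u : 𝕊ⁿ → 𝒩 be a continuous map with E_{t,n/s}(u) < ∞ which minimizes the E_{t,n/s}-energy in its homotopy class, i.e. E_{t,n/s}(u) ≤ E_{t,n/s}(v) for every continuous v : 𝕊ⁿ → 𝒩 homotopic to u through maps into 𝒩. Then for every y₀ ∈ 𝕊ⁿ and every ρ ∈ (0, ρ₀]: ∫_{D(y₀,ρ)} ∫_{𝕊ⁿ} |u(x)−u(y)|^{n/s}/|x−y|^{n+t·n/s} dμ(x) dμ(y) ≤ C · ρ^{−n(t/s−1)} · ∫_{𝕊ⁿ∖D(y₀,ρ)} ∫_{𝕊ⁿ} |u(x)−u(y)|^{n/s}/|x−y|^{n+t·n/s} dμ(x) dμ(y), where D(y₀,ρ) := {x ∈ 𝕊ⁿ : |x−y₀| < ρ} and both sides are interpreted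 in [0,∞]. -/
open MeasureTheory
open scoped ENNReal

noncomputable section

/-- The unit sphere `𝕊ⁿ ⊆ ℝ^{n+1}`. -/
abbrev Sph (n : ℕ) : Type _ := ↥(Metric.sphere (0 : EuclideanSpace ℝ (Fin (n + 1))) 1)

/-- The `n`-dimensional Hausdorff measure on `𝕊ⁿ`. -/
def sphMeasure (n : ℕ) : Measure (Sph n) := μH[(n : ℝ)]

/-- The kernel `|u(x)-u(y)|^q / |x-y|^e` of the fractional energies, as a value in `[0,∞]`. -/
def sphKer (n M : ℕ) (q e : ℝ) (u : Sph n → EuclideanSpace ℝ (Fin M))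
    (x y : Sph n) : ℝ≥0∞ :=
  ENNReal.ofReal (‖u x - u y‖ ^ q / dist x y ^ e)

/-- The fractional energy `E_{t,p}(u) = ∫∫ |u(x)-u(y)|^p / |x-y|^{n+tp} dμ dμ`. -/
def sphEnergy (n M : ℕ) (t p : ℝ) (u : Sph n → EuclideanSpace ℝ (Fin M)) : ℝ≥0∞ :=
  ∫⁻ x, ∫⁻ y, sphKer n M p ((n : ℝ) + t * p) u x y ∂(sphMeasure n) ∂(sphMeasure n)

/-- `f` and `g` are homotopic as maps from `X` into the subset `N` of `E`. -/
def HomotopicIn {X E : Type*} [TopologicalSpace X] [TopologicalSpace E] (N : Set E)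
    (f g : X → E) : Prop :=
  ∃ H : unitInterval × X → E, Continuous H ∧ (∀ p, H p ∈ N) ∧
    (∀ x, H (0, x) = f x) ∧ (∀ x, H (1, x) = g x)

/-- The Hausdorff measure on the sphere is sigma-finite. -/
theorem sphMeasure_sigmaFinite (n : ℕ) (hn : 1 ≤ n) : SigmaFinite (sphMeasure n) := by
  have : Fact (Module.finrank ℝ (EuclideanSpace ℝ (Fin (n + 1))) = n + 1) :=
    Fact.mk (@finrank_euclideanSpace_fin ℝ _ (n + 1))
  let v : Sph n := ⟨EuclideanSpace.single 0 1, by simp⟩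
  let φ : (Fin n → ℝ) → Sph n := fun w => (stereographic' n v).symm (WithLp.toLp 2 w)
  have hφ : ContDiff ℝ 1 (fun w => (φ w : EuclideanSpace ℝ (Fin (n + 1)))) := by
    let L : (Fin n → ℝ) →L[ℝ] EuclideanSpace ℝ (Fin (n + 1)) :=
      (Submodule.subtypeL (Submodule.span ℝ {(v : EuclideanSpace ℝ (Fin (n + 1)))})ᗮ).comp
      (((OrthonormalBasis.fromOrthogonalSpanSingleton (𝕜 := ℝ) n
        (ne_zero_of_mem_unit_sphere v)).repr.symm.toContinuousLinearEquiv :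
          EuclideanSpace ℝ (Fin n) →L[ℝ] _).comp
        ((EuclideanSpace.equiv (Fin n) ℝ).symm : (Fin n → ℝ) →L[ℝ] EuclideanSpace ℝ (Fin n)))
    have : (fun w => (φ w : EuclideanSpace ℝ (Fin (n + 1)))) =
        fun w => stereoInvFunAux (v : EuclideanSpace ℝ (Fin (n + 1))) (L w) := by
      funext w
      simp only [φ, stereographic'_symm_apply, stereoInvFunAux_apply, smul_add]
      rfl
    rw [this]
    exact contDiff_stereoInvFunAux.comp L.contDiff
  have hlip : ∀ w, ∃ K : NNReal, ∃ t ∈ nhds w, LipschitzOnWith K φ t := by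
    intro w
    obtain ⟨K, t, ht, h⟩ := hφ.locallyLipschitz w
    exact ⟨K, t, ht, fun x hx y hy => h hx hy⟩
  choose K t ht hK using hlip
  let t' : (Fin n → ℝ) → Set (Fin n → ℝ) := fun w => t w ∩ Metric.ball w 1
  have ht' : ∀ w, t' w ∈ nhds w := fun w =>
    Filter.inter_mem (ht w) (Metric.ball_mem_nhds w one_pos)
  obtain ⟨S, hS, hSU⟩ := TopologicalSpace.countable_cover_nhds ht'
  refine Measure.sigmaFinite_of_countable (S := insert {v} ((fun w => φ '' t' w) '' S))
    ((hS.image _).insert _) ?_ ?_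
  · rintro s (rfl | ⟨w, hw, rfl⟩)
    · have : (0 : ℝ) < n := by exact_mod_cast hn
      have := Measure.nullSingletonClass_hausdorff (Sph n) this
      have : sphMeasure n {v} = 0 := measure_singleton (μ := (μH[(n : ℝ)] : Measure (Sph n))) v
      simp [this]
    · have h1 : LipschitzOnWith (K w) φ (t' w) := (hK w).mono Set.inter_subset_left
      have h2 := h1.hausdorffMeasure_image_le (d := (n : ℝ)) (Nat.cast_nonneg n)
      refine lt_of_le_of_lt h2 (ENNReal.mul_lt_top (by
        apply ENNReal.rpow_lt_top_of_nonneg (Nat.cast_nonneg n) ENNReal.coe_ne_top) ?_)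
      have h3 : (μH[(n : ℝ)] : Measure (Fin n → ℝ)) = volume := by
        have := hausdorffMeasure_pi_real (ι := Fin n)
        simpa using this
      rw [h3]
      exact lt_of_le_of_lt (measure_mono Set.inter_subset_right) measure_ball_lt_top
  · refine Set.eq_univ_of_forall fun x => ?_
    by_cases hx : x = v
    · exact ⟨{v}, Set.mem_insert _ _, hx⟩
    · let z := stereographic' n v x
      have hz : (stereographic' n v).symm z = x :=
        (stereographic' n v).left_inv (by simpa using hx)
      have hzU : (WithLp.ofLp z) ∈ ⋃ w ∈ S, t' w := by rw [hSU]; trivial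
      simp only [Set.mem_iUnion] at hzU
      obtain ⟨w, hw, hzw⟩ := hzU
      exact ⟨φ '' t' w, Set.mem_insert_of_mem _ ⟨w, hw, rfl⟩, ⟨_, hzw, hz⟩⟩

/-- One half of the change of variables formula for conformal maps. -/
theorem hausdorff_conformal_image_le {X : Type*} [MetricSpace X] [MeasurableSpace X] [BorelSpace X]
    (d : ℝ) (hd : 0 ≤ d) (σ : X → X) (l : X → ℝ) (hl : Continuous l) (hpos : ∀ x, 0 < l x)
    (hσ : ∀ x y, dist (σ x) (σ y) ^ 2 = l x * l y * dist x y ^ 2)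
    (B : Set X) (hB : MeasurableSet B) :
    (μH[d] : Measure X) (σ '' B) ≤ ∫⁻ x in B, ENNReal.ofReal (l x ^ d) ∂(μH[d] : Measure X) := by
  have key : ∀ ε : ℝ, 0 < ε → (μH[d] : Measure X) (σ '' B) ≤ ENNReal.ofReal (Real.exp (ε * d)) *
      ∫⁻ x in B, ENNReal.ofReal (l x ^ d) ∂(μH[d] : Measure X) := by
    intro ε hε
    let f : X → ℤ := fun x => ⌊Real.log (l x) / ε⌋
    have hf : Measurable f :=
      Int.measurable_floor.comp ((Real.measurable_log.comp hl.measurable).div_const ε)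
    have hlow : ∀ x, Real.exp (ε * f x) ≤ l x := by
      intro x
      rw [← Real.le_log_iff_exp_le (hpos x)]
      have := Int.floor_le (Real.log (l x) / ε)
      rw [le_div_iff₀ hε] at this
      linarith
    have hup : ∀ x, l x ≤ Real.exp (ε * (f x + 1)) := by
      intro x
      rw [← Real.log_le_iff_le_exp (hpos x)]
      have := (Int.lt_floor_add_one (Real.log (l x) / ε)).le
      rw [div_le_iff₀ hε] at this
      linarith
    have hBU : B = ⋃ i : ℤ, B ∩ f ⁻¹' {i} := by
      ext x; simp
    have hm : ∀ i : ℤ, MeasurableSet (B ∩ f ⁻¹' {i}) := fun i =>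
      hB.inter (hf (measurableSet_singleton i))
    have hdisj : Pairwise (Function.onFun Disjoint fun i : ℤ => B ∩ f ⁻¹' {i}) := by
      intro i j hij
      rw [Function.onFun, Set.disjoint_left]
      rintro x ⟨_, hx⟩ ⟨_, hy⟩
      exact hij (hx.symm.trans hy)
    have step : ∀ i : ℤ, (μH[d] : Measure X) (σ '' (B ∩ f ⁻¹' {i})) ≤
        ENNReal.ofReal (Real.exp (ε * d)) *
          ∫⁻ x in B ∩ f ⁻¹' {i}, ENNReal.ofReal (l x ^ d) ∂(μH[d] : Measure X) := by
      intro i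
      set c : ℝ := Real.exp (ε * (i + 1)) with hc
      have hlip : LipschitzOnWith (Real.toNNReal c) σ (B ∩ f ⁻¹' {i}) := by
        apply LipschitzOnWith.of_dist_le_mul
        rintro x ⟨_, hx⟩ y ⟨_, hy⟩
        rw [Real.coe_toNNReal _ (Real.exp_pos _).le]
        have h1 := hup x
        have h2 := hup y
        rw [show f x = i from hx] at h1
        rw [show f y = i from hy] at h2
        apply le_of_sq_le_sq _ (by positivity)
        rw [hσ, mul_pow]
        apply mul_le_mul_of_nonneg_right _ (by positivity)
        rw [sq]
        exact mul_le_mul h1 h2 (hpos y).le (Real.exp_pos _).le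
      refine (hlip.hausdorffMeasure_image_le hd).trans ?_
      have hcd : ((Real.toNNReal c : NNReal) : ℝ≥0∞) ^ d = ENNReal.ofReal (Real.exp (ε * d)) *
          ENNReal.ofReal (Real.exp (ε * i) ^ d) := by
        rw [← ENNReal.ofReal_mul (Real.exp_pos _).le]
        change (ENNReal.ofReal c) ^ d = _
        rw [ENNReal.ofReal_rpow_of_pos (Real.exp_pos _), ← Real.exp_mul, ← Real.exp_mul,
          ← Real.exp_add]
        congr 2; ring
      rw [hcd, mul_assoc]
      gcongr
      rw [← setLIntegral_const]
      apply setLIntegral_mono' (hm i)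
      rintro x ⟨_, hx⟩
      apply ENNReal.ofReal_le_ofReal
      apply Real.rpow_le_rpow (Real.exp_pos _).le _ hd
      have := hlow x
      rwa [show f x = i from hx] at this
    calc (μH[d] : Measure X) (σ '' B) = (μH[d] : Measure X) (⋃ i : ℤ, σ '' (B ∩ f ⁻¹' {i})) := by
          rw [← Set.image_iUnion, ← hBU]
      _ ≤ ∑' i : ℤ, (μH[d] : Measure X) (σ '' (B ∩ f ⁻¹' {i})) := measure_iUnion_le _
      _ ≤ ∑' i : ℤ, ENNReal.ofReal (Real.exp (ε * d)) *
          ∫⁻ x in B ∩ f ⁻¹' {i}, ENNReal.ofReal (l x ^ d) ∂(μH[d] : Measure X) :=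
          ENNReal.tsum_le_tsum step
      _ = ENNReal.ofReal (Real.exp (ε * d)) *
          ∫⁻ x in B, ENNReal.ofReal (l x ^ d) ∂(μH[d] : Measure X) := by
          rw [ENNReal.tsum_mul_left, ← lintegral_iUnion hm hdisj, ← hBU]
  set I := ∫⁻ x in B, ENNReal.ofReal (l x ^ d) ∂(μH[d] : Measure X) with hI
  have hlim : Filter.Tendsto (fun ε : ℝ => ENNReal.ofReal (Real.exp (ε * d)) * I)
      (nhdsWithin 0 (Set.Ioi 0)) (nhds (ENNReal.ofReal (Real.exp (0 * d)) * I)) := by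
    apply ENNReal.Tendsto.mul_const
    · apply Filter.Tendsto.mono_left _ nhdsWithin_le_nhds
      have : Continuous fun ε : ℝ => ENNReal.ofReal (Real.exp (ε * d)) :=
        ENNReal.continuous_ofReal.comp (by fun_prop)
      exact this.tendsto 0
    · left; simp
  have := ge_of_tendsto hlim (by
    filter_upwards [self_mem_nhdsWithin] with ε hε
    exact key ε hε)
  simpa using this

/-- Conformal dilation of the sphere (a Lorentz boost), as a formula in the ambient space. -/
def boostVec {E : Type*} [NormedAddCommGroup E] [InnerProductSpace ℝ E] (η : ℝ) (e x : E) : E :=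
  (Real.cosh η - Real.sinh η * inner ℝ x e)⁻¹ •
    (x + ((Real.cosh η - 1) * inner ℝ x e - Real.sinh η) • e)

theorem boost_den_pos {E : Type*} [NormedAddCommGroup E] [InnerProductSpace ℝ E] (η : ℝ) {e x : E}
    (he : ‖e‖ = 1) (hx : ‖x‖ = 1) : 0 < Real.cosh η - Real.sinh η * inner ℝ x e := by
  have h : |inner ℝ x e| ≤ 1 := by
    have := abs_real_inner_le_norm x e
    rwa [he, hx, one_mul] at this
  have h1 : |Real.sinh η| < Real.cosh η := by
    apply abs_lt_of_sq_lt_sq _ (Real.cosh_pos η).le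
    have := Real.cosh_sq η
    linarith
  have h2 : Real.sinh η * inner ℝ x e ≤ |Real.sinh η| := by
    calc Real.sinh η * inner ℝ x e ≤ |Real.sinh η * inner ℝ x e| := le_abs_self _
      _ = |Real.sinh η| * |inner ℝ x e| := abs_mul _ _
      _ ≤ |Real.sinh η| * 1 := by gcongr
      _ = _ := mul_one _
  linarith

theorem boost_inner {E : Type*} [NormedAddCommGroup E] [InnerProductSpace ℝ E] (η : ℝ) {e x y : E}
    (he : ‖e‖ = 1) (hx : ‖x‖ = 1) (hy : ‖y‖ = 1) :
    inner ℝ (boostVec η e x) (boostVec η e y) =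
      1 + (inner ℝ x y - 1) * ((Real.cosh η - Real.sinh η * inner ℝ x e)⁻¹ *
        (Real.cosh η - Real.sinh η * inner ℝ y e)⁻¹) := by
  have h1 := (boost_den_pos η he hx).ne'
  have h2 := (boost_den_pos η he hy).ne'
  have hee : inner ℝ e e = 1 := by rw [real_inner_self_eq_norm_sq, he]; norm_num
  have hc := Real.cosh_sq η
  simp only [boostVec, inner_smul_left, inner_smul_right, inner_add_left, inner_add_right, hee,
    real_inner_comm y e, RCLike.conj_to_real]
  generalize inner ℝ x e = a at *
  generalize inner ℝ y e = b at *
  generalize inner ℝ x y = c at *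
  generalize Real.cosh η = C at *
  generalize Real.sinh η = S at *
  field_simp
  linear_combination (a * b - 1) * hc

theorem boost_inv {E : Type*} [NormedAddCommGroup E] [InnerProductSpace ℝ E] (η : ℝ) {e x : E}
    (he : ‖e‖ = 1) (hx : ‖x‖ = 1) :
    boostVec (-η) e (boostVec η e x) = x := by
  have h1 := (boost_den_pos η he hx).ne'
  have hee : inner ℝ e e = 1 := by rw [real_inner_self_eq_norm_sq, he]; norm_num
  have hc := Real.cosh_sq η
  have hin : inner ℝ (boostVec η e x) e = (Real.cosh η - Real.sinh η * inner ℝ x e)⁻¹ *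
      (Real.cosh η * inner ℝ x e - Real.sinh η) := by
    simp only [boostVec, inner_smul_left, inner_add_left, hee, RCLike.conj_to_real]
    ring
  have hQ : Real.cosh η + Real.sinh η * inner ℝ (boostVec η e x) e =
      (Real.cosh η - Real.sinh η * inner ℝ x e)⁻¹ := by
    rw [hin]
    field_simp
    linear_combination hc
  rw [boostVec, Real.cosh_neg, Real.sinh_neg, neg_mul, sub_neg_eq_add, hQ, inv_inv, hin, boostVec,
    smul_add, smul_smul, mul_inv_cancel₀ h1, one_smul, smul_smul, add_assoc,
    ← add_smul]
  convert add_zero x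
  rw [smul_eq_zero]
  left
  generalize inner ℝ x e = a at *
  generalize Real.cosh η = C at *
  generalize Real.sinh η = S at *
  linear_combination a * hc + (C - 1) * (C * a - S) * mul_inv_cancel₀ h1

theorem sph_norm {n : ℕ} (x : Sph n) : ‖(x : EuclideanSpace ℝ (Fin (n + 1)))‖ = 1 :=
  norm_eq_of_mem_sphere x

/-- The conformal dilation of the sphere. -/
def boost {n : ℕ} (η : ℝ) (e x : Sph n) : Sph n :=
  ⟨boostVec η (e : EuclideanSpace ℝ (Fin (n + 1))) x, by
    rw [mem_sphere_zero_iff_norm]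
    have := boost_inner η (sph_norm e) (sph_norm x) (sph_norm x)
    rw [real_inner_self_eq_norm_sq, real_inner_self_eq_norm_sq, sph_norm x] at this
    have h : ‖boostVec η (e : EuclideanSpace ℝ (Fin (n + 1))) x‖ ^ 2 = 1 := by
      rw [this]; ring
    exact (pow_eq_one_iff_of_nonneg (norm_nonneg _) two_ne_zero).1 h⟩

/-- The conformal factor of `boost`. -/
def boostFac {n : ℕ} (η : ℝ) (e x : Sph n) : ℝ :=
  (Real.cosh η - Real.sinh η *
    inner ℝ (x : EuclideanSpace ℝ (Fin (n + 1))) (e : EuclideanSpace ℝ (Fin (n + 1))))⁻¹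

theorem boostFac_pos {n : ℕ} (η : ℝ) (e x : Sph n) : 0 < boostFac η e x :=
  inv_pos.2 (boost_den_pos η (sph_norm e) (sph_norm x))

theorem boost_boost {n : ℕ} (η : ℝ) (e x : Sph n) : boost (-η) e (boost η e x) = x :=
  Subtype.ext (boost_inv η (sph_norm e) (sph_norm x))

theorem boost_boost' {n : ℕ} (η : ℝ) (e x : Sph n) : boost η e (boost (-η) e x) = x := by
  have := boost_boost (-η) e x
  rwa [neg_neg] at this

theorem boost_zero {n : ℕ} (e x : Sph n) : boost 0 e x = x := by
  apply Subtype.ext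
  simp [boost, boostVec]

theorem sph_dist_sq {n : ℕ} (x y : Sph n) : dist x y ^ 2 = 2 - 2 * inner ℝ
    (x : EuclideanSpace ℝ (Fin (n + 1))) (y : EuclideanSpace ℝ (Fin (n + 1))) := by
  rw [Subtype.dist_eq, dist_eq_norm, norm_sub_sq_real, sph_norm, sph_norm]
  ring

theorem boost_dist_sq {n : ℕ} (η : ℝ) (e x y : Sph n) :
    dist (boost η e x) (boost η e y) ^ 2 = boostFac η e x * boostFac η e y * dist x y ^ 2 := by
  rw [sph_dist_sq, sph_dist_sq]
  have := boost_inner η (sph_norm e) (sph_norm x) (sph_norm y)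
  simp only [boost, boostFac]
  rw [this]
  ring

theorem continuous_boost_joint {n : ℕ} (e : Sph n) :
    Continuous fun q : ℝ × Sph n => boost q.1 e q.2 := by
  unfold boost
  apply Continuous.subtype_mk
  unfold boostVec
  apply Continuous.fun_smul
  · apply Continuous.inv₀
    · exact (Real.continuous_cosh.comp continuous_fst).sub
        ((Real.continuous_sinh.comp continuous_fst).mul (by fun_prop))
    · intro q
      exact (boost_den_pos q.1 (sph_norm e) (sph_norm q.2)).ne'
  · apply Continuous.add (by fun_prop)
    apply Continuous.fun_smul _ continuous_const
    exact (((Real.continuous_cosh.comp continuous_fst).sub continuous_const).mul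
      (by fun_prop)).sub (Real.continuous_sinh.comp continuous_fst)

theorem continuous_boost {n : ℕ} (η : ℝ) (e : Sph n) : Continuous (boost η e) :=
  (continuous_boost_joint e).comp (Continuous.prodMk_right η)

theorem continuous_boostFac {n : ℕ} (η : ℝ) (e : Sph n) : Continuous (boostFac η e) := by
  unfold boostFac
  apply Continuous.inv₀ (by fun_prop)
  intro x
  exact (boost_den_pos η (sph_norm e) (sph_norm x)).ne'

/-- The conformal factor in terms of the dilation factor and the distance to the center. -/
theorem boostFac_log {n : ℕ} (k : ℝ) (hk : 0 < k) (e x : Sph n) :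
    boostFac (Real.log k) e x = k / (1 + (k ^ 2 - 1) * dist x e ^ 2 / 4) := by
  rw [boostFac, sph_dist_sq, Real.cosh_log hk, Real.sinh_log hk, eq_div_iff_mul_eq]
  · have := (boost_den_pos (Real.log k) (sph_norm e) (sph_norm x)).ne'
    rw [Real.cosh_log hk, Real.sinh_log hk] at this
    rw [inv_mul_eq_iff_eq_mul₀ this]
    field_simp
    ring
  · have := (boost_den_pos (Real.log k) (sph_norm e) (sph_norm x))
    rw [Real.cosh_log hk, Real.sinh_log hk] at this
    have h2 := mul_pos hk this
    have h3 : k * ((k + k⁻¹) / 2 - (k - k⁻¹) / 2 * inner ℝ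
      (x : EuclideanSpace ℝ (Fin (n + 1))) (e : EuclideanSpace ℝ (Fin (n + 1)))) =
      1 + (k ^ 2 - 1) * (2 - 2 * inner ℝ
      (x : EuclideanSpace ℝ (Fin (n + 1))) (e : EuclideanSpace ℝ (Fin (n + 1)))) / 4 := by
      field_simp
      ring
    rw [← h3]
    exact h2.ne'

theorem sph_dist_le {n : ℕ} (x y : Sph n) : dist x y ≤ 2 := by
  rw [Subtype.dist_eq, dist_eq_norm]
  refine (norm_sub_le _ _).trans ?_
  rw [sph_norm, sph_norm]; norm_num

theorem boostFac_lower {n : ℕ} (ρ : ℝ) (h0 : 0 < ρ) (h1 : ρ < 1) (e x : Sph n) :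
    ρ / 2 ≤ boostFac (Real.log (2 / ρ)) e x := by
  rw [boostFac_log _ (by positivity)]
  have hd := sph_dist_le x e
  have hd2 : dist x e ^ 2 ≤ 4 := by nlinarith [dist_nonneg (x := x) (y := e)]
  have hk : 0 < (2 / ρ) ^ 2 - 1 := by
    rw [div_pow, sub_pos, lt_div_iff₀ (by positivity)]; nlinarith
  rw [le_div_iff₀ (by positivity)]
  have : 1 + ((2 / ρ) ^ 2 - 1) * dist x e ^ 2 / 4 ≤ (2 / ρ) ^ 2 := by nlinarith
  calc ρ / 2 * (1 + ((2 / ρ) ^ 2 - 1) * dist x e ^ 2 / 4) ≤ ρ / 2 * (2 / ρ) ^ 2 := by gcongr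
    _ = 2 / ρ := by field_simp; try norm_num

theorem boostFac_lower_ball {n : ℕ} (ρ : ℝ) (h0 : 0 < ρ) (h1 : ρ < 1) (e x : Sph n)
    (hx : x ∈ Metric.ball e ρ) :
    1 / ρ ≤ boostFac (Real.log (2 / ρ)) e x := by
  rw [boostFac_log _ (by positivity)]
  rw [Metric.mem_ball] at hx
  have hd2 : dist x e ^ 2 ≤ ρ ^ 2 := by nlinarith [dist_nonneg (x := x) (y := e)]
  have hk : 0 < (2 / ρ) ^ 2 - 1 := by
    rw [div_pow, sub_pos, lt_div_iff₀ (by positivity)]; nlinarith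
  rw [le_div_iff₀ (by positivity)]
  have h3 : ((2 / ρ) ^ 2 - 1) * ρ ^ 2 = 4 - ρ ^ 2 := by field_simp; try norm_num
  have : 1 + ((2 / ρ) ^ 2 - 1) * dist x e ^ 2 / 4 ≤ 2 := by nlinarith
  calc 1 / ρ * (1 + ((2 / ρ) ^ 2 - 1) * dist x e ^ 2 / 4) ≤ 1 / ρ * 2 := by gcongr
    _ = 2 / ρ := by ring

/-- `boost` as a homeomorphism. -/
def boostHomeo {n : ℕ} (η : ℝ) (e : Sph n) : Sph n ≃ₜ Sph n where
  toFun := boost η e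
  invFun := boost (-η) e
  left_inv := boost_boost η e
  right_inv := boost_boost' η e
  continuous_toFun := continuous_boost η e
  continuous_invFun := continuous_boost (-η) e

theorem boost_cov {n : ℕ} (η : ℝ) (e : Sph n) (g : Sph n → ℝ≥0∞) :
    ∫⁻ x, g (boost (-η) e x) ∂(sphMeasure n) ≤
      ∫⁻ x, ENNReal.ofReal (boostFac η e x ^ (n : ℝ)) * g x ∂(sphMeasure n) := by
  let h := (boostHomeo η e).symm.toMeasurableEquiv
  have hh : ∀ x, h x = boost (-η) e x := fun x => rfl
  have h1 : ∫⁻ x, g (boost (-η) e x) ∂(sphMeasure n) = ∫⁻ x, g x ∂((sphMeasure n).map h) := by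
    rw [lintegral_map_equiv]
    rfl
  rw [h1]
  have hmeas : Measurable fun x => ENNReal.ofReal (boostFac η e x ^ (n : ℝ)) :=
    ENNReal.measurable_ofReal.comp ((continuous_boostFac η e).measurable.pow_const _)
  have h2 : (sphMeasure n).map h ≤
      (sphMeasure n).withDensity fun x => ENNReal.ofReal (boostFac η e x ^ (n : ℝ)) := by
    rw [Measure.le_iff]
    intro B hB
    rw [h.map_apply, withDensity_apply _ hB]
    have h3 : h ⁻¹' B = boost η e '' B := by
      ext x
      constructor
      · intro hx
        exact ⟨boost (-η) e x, hx, boost_boost' η e x⟩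
      · rintro ⟨y, hy, rfl⟩
        change boost (-η) e (boost η e y) ∈ B
        rwa [boost_boost]
    rw [h3]
    exact hausdorff_conformal_image_le (n : ℝ) (Nat.cast_nonneg n) (boost η e) (boostFac η e)
      (continuous_boostFac η e) (boostFac_pos η e) (boost_dist_sq η e) B hB
  refine (lintegral_mono' h2 le_rfl).trans ?_
  exact lintegral_withDensity_le_lintegral_mul _ hmeas g

theorem boost_dist {n : ℕ} (η : ℝ) (e x y : Sph n) :
    dist (boost η e x) (boost η e y) =
      (boostFac η e x * boostFac η e y) ^ (1 / 2 : ℝ) * dist x y := by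
  have hp : 0 ≤ boostFac η e x * boostFac η e y :=
    (mul_pos (boostFac_pos η e x) (boostFac_pos η e y)).le
  rw [← Real.sqrt_eq_rpow]
  apply (sq_eq_sq₀ dist_nonneg (by positivity)).1
  rw [boost_dist_sq, mul_pow, Real.sq_sqrt hp]

theorem energy_boost_le {n M : ℕ} (t p η : ℝ) (e : Sph n) (u : Sph n → EuclideanSpace ℝ (Fin M)) :
    sphEnergy n M t p (fun x => u (boost (-η) e x)) ≤
      ∫⁻ x, ∫⁻ y, sphKer n M p ((n : ℝ) + t * p) u x y *
        ENNReal.ofReal ((boostFac η e x * boostFac η e y) ^ (((n : ℝ) - t * p) / 2))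
        ∂(sphMeasure n) ∂(sphMeasure n) := by
  let G : Sph n → Sph n → ℝ≥0∞ := fun x y => ENNReal.ofReal
    (‖u x - u y‖ ^ p / dist (boost η e x) (boost η e y) ^ ((n : ℝ) + t * p))
  have hG : ∀ x y, sphKer n M p ((n : ℝ) + t * p) (fun x => u (boost (-η) e x)) x y =
      G (boost (-η) e x) (boost (-η) e y) := by
    intro x y
    simp only [sphKer, G, boost_boost']
  unfold sphEnergy
  simp only [hG]
  calc ∫⁻ x, ∫⁻ y, G (boost (-η) e x) (boost (-η) e y) ∂(sphMeasure n) ∂(sphMeasure n)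
      ≤ ∫⁻ x, ENNReal.ofReal (boostFac η e x ^ (n : ℝ)) *
          ∫⁻ y, G x (boost (-η) e y) ∂(sphMeasure n) ∂(sphMeasure n) :=
        boost_cov η e (fun x => ∫⁻ y, G x (boost (-η) e y) ∂(sphMeasure n))
    _ ≤ ∫⁻ x, ENNReal.ofReal (boostFac η e x ^ (n : ℝ)) *
          ∫⁻ y, ENNReal.ofReal (boostFac η e y ^ (n : ℝ)) * G x y
            ∂(sphMeasure n) ∂(sphMeasure n) := by
        apply lintegral_mono
        intro x
        exact mul_le_mul_right (boost_cov η e (G x)) _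
    _ = _ := by
        apply lintegral_congr
        intro x
        rw [← lintegral_const_mul' _ _ ENNReal.ofReal_ne_top]
        apply lintegral_congr
        intro y
        have hx := boostFac_pos η e x
        have hy := boostFac_pos η e y
        simp only [G, sphKer]
        rw [← ENNReal.ofReal_mul (by positivity), ← ENNReal.ofReal_mul (by positivity),
          ← ENNReal.ofReal_mul (by positivity), boost_dist,
          Real.mul_rpow (by positivity) dist_nonneg, ← Real.rpow_mul (by positivity), ← mul_assoc,
          ← Real.mul_rpow hx.le hy.le]
        congr 1
        set l := boostFac η e x * boostFac η e y with hl
        have hlp : 0 < l := mul_pos hx hy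
        have h1 : l ^ (n : ℝ) = l ^ (1 / 2 * ((n : ℝ) + t * p)) * l ^ (((n : ℝ) - t * p) / 2) := by
          rw [← Real.rpow_add hlp]
          congr 1; ring
        rw [h1]
        have h2 : l ^ (1 / 2 * ((n : ℝ) + t * p)) ≠ 0 := (Real.rpow_pos_of_pos hlp _).ne'
        rw [← div_div, div_right_comm]
        generalize ‖u x - u y‖ ^ p / dist x y ^ ((n : ℝ) + t * p) = q
        field_simp

/-- The abstract absorption argument. -/
theorem absorb {X : Type*} [MeasurableSpace X] (μ : Measure X) [SFinite μ]
    (K W : X → X → ℝ≥0∞) (hK : Measurable (Function.uncurry K))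
    (hsymm : ∀ x y, K x y = K y x) (D : Set X) (hD : MeasurableSet D) (θ Θ : ℝ)
    (hθ0 : 0 ≤ θ) (hθ : θ < 1) (hΘ : 1 ≤ Θ)
    (hfin : ∫⁻ x, ∫⁻ y, K x y ∂μ ∂μ < ⊤)
    (hmin : ∫⁻ x, ∫⁻ y, K x y ∂μ ∂μ ≤ ∫⁻ x, ∫⁻ y, K x y * W x y ∂μ ∂μ)
    (hWD : ∀ x ∈ D, ∀ y ∈ D, W x y ≤ ENNReal.ofReal θ)
    (hWA : ∀ x y, W x y ≤ ENNReal.ofReal Θ) :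
    ∫⁻ y in D, ∫⁻ x, K x y ∂μ ∂μ ≤
      ENNReal.ofReal (2 * (Θ - 1) / (1 - θ) + 1) * ∫⁻ y in Dᶜ, ∫⁻ x, K x y ∂μ ∂μ := by
  simp only [fun x y => hsymm x y]
  have hKx : ∀ x, Measurable (K x) := fun x => hK.of_uncurry_left
  have hm : ∀ ν : Measure X, SFinite ν → Measurable fun x => ∫⁻ y, K x y ∂ν :=
    fun ν _ => hK.lintegral_prod_right'
  set P := ∫⁻ x in D, ∫⁻ y in D, K x y ∂μ ∂μ with hP
  set Y := ∫⁻ x in D, ∫⁻ y in Dᶜ, K x y ∂μ ∂μ with hY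
  set Z := ∫⁻ x in Dᶜ, ∫⁻ y, K x y ∂μ ∂μ with hZ
  have hsplit : ∫⁻ x in D, ∫⁻ y, K x y ∂μ ∂μ = P + Y := by
    rw [hP, hY, ← lintegral_add_left (hm _ inferInstance)]
    apply lintegral_congr
    intro x
    rw [lintegral_add_compl _ hD]
  have htot : ∫⁻ x, ∫⁻ y, K x y ∂μ ∂μ = P + Y + Z := by
    rw [← lintegral_add_compl _ hD, hsplit]
  have hYZ : Y ≤ Z := by
    rw [hY, hZ, lintegral_lintegral_swap hK.aemeasurable]
    apply lintegral_mono
    intro y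
    refine (setLIntegral_le_lintegral _ _).trans (le_of_eq ?_)
    exact lintegral_congr fun x => hsymm x y
  have hKW : ∫⁻ x, ∫⁻ y, K x y * W x y ∂μ ∂μ ≤
      ENNReal.ofReal θ * P + ENNReal.ofReal Θ * (Y + Z) := by
    rw [← lintegral_add_compl _ hD, mul_add, ← add_assoc]
    apply add_le_add
    · rw [hP, hY, ← lintegral_const_mul' _ _ ENNReal.ofReal_ne_top,
        ← lintegral_const_mul' _ _ ENNReal.ofReal_ne_top,
        ← lintegral_add_left ((hm _ inferInstance).const_mul _)]
      apply setLIntegral_mono' hD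
      intro x hx
      rw [← lintegral_add_compl _ hD, ← lintegral_const_mul' _ _ ENNReal.ofReal_ne_top,
        ← lintegral_const_mul' _ _ ENNReal.ofReal_ne_top]
      apply add_le_add
      · apply setLIntegral_mono' hD
        intro y hy
        rw [mul_comm]
        exact mul_le_mul_left (hWD x hx y hy) _
      · apply lintegral_mono
        intro y
        dsimp only
        rw [mul_comm]
        exact mul_le_mul_left (hWA x y) _
    · rw [hZ, ← lintegral_const_mul' _ _ ENNReal.ofReal_ne_top]
      apply lintegral_mono
      intro x
      dsimp only
      rw [← lintegral_const_mul' _ _ ENNReal.ofReal_ne_top]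
      apply lintegral_mono
      intro y
      dsimp only
      rw [mul_comm]
      exact mul_le_mul_left (hWA x y) _
  have hmain := hmin.trans hKW
  rw [hsplit]
  rw [htot] at hmain hfin
  clear_value P Y Z
  have hZf : Z ≠ ⊤ := (lt_of_le_of_lt le_add_self hfin).ne
  have hPYf : P + Y ≠ ⊤ := (lt_of_le_of_lt le_self_add hfin).ne
  have hPf : P ≠ ⊤ := (lt_of_le_of_lt le_self_add (lt_top_iff_ne_top.2 hPYf)).ne
  have hYf : Y ≠ ⊤ := (lt_of_le_of_lt le_add_self (lt_top_iff_ne_top.2 hPYf)).ne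
  lift P to NNReal using hPf
  lift Y to NNReal using hYf
  lift Z to NNReal using hZf
  have e1 : ∀ a : NNReal, (a : ℝ≥0∞) = ENNReal.ofReal (a : ℝ) := fun a =>
    (ENNReal.ofReal_coe_nnreal).symm
  have p0 : (0 : ℝ) ≤ P := P.2
  have y0 : (0 : ℝ) ≤ Y := Y.2
  have z0 : (0 : ℝ) ≤ Z := Z.2
  have hΘ0 : 0 ≤ Θ := by linarith
  have h1θ : 0 < 1 - θ := by linarith
  have hC : 0 ≤ 2 * (Θ - 1) / (1 - θ) := div_nonneg (by linarith) h1θ.le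
  rw [e1 P, e1 Y, e1 Z, ← ENNReal.ofReal_add p0 y0, ← ENNReal.ofReal_add (by positivity) z0,
    ← ENNReal.ofReal_mul hθ0, ← ENNReal.ofReal_add y0 z0, ← ENNReal.ofReal_mul hΘ0,
    ← ENNReal.ofReal_add (by positivity) (by positivity),
    ENNReal.ofReal_le_ofReal_iff (by positivity)] at hmain
  rw [e1 P, e1 Y, e1 Z, ← ENNReal.ofReal_add p0 y0, ← ENNReal.ofReal_mul (by linarith)]
  apply ENNReal.ofReal_le_ofReal
  have hYZ' : (Y : ℝ) ≤ Z := by exact_mod_cast hYZ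
  have h5 : (P : ℝ) ≤ 2 * (Θ - 1) / (1 - θ) * Z := by
    rw [div_mul_eq_mul_div, le_div_iff₀ h1θ]
    nlinarith
  linarith

theorem numeric_bound (ρ₀ B b ρ : ℝ) (hρ₀ : ρ₀ < 1) (hb : 0 < b) (hbB : b ≤ B)
    (hρ : 0 < ρ) (hρρ : ρ ≤ ρ₀) :
    2 * (2 ^ b * ρ ^ (-b) - 1) / (1 - ρ ^ b) + 1 ≤
      (2 * (2 ^ B * (1 + 1 / (-Real.log ρ₀))) + 1) * ρ ^ (-b) := by
  have hρ0 : 0 < ρ₀ := hρ.trans_le hρρ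
  have hL : 0 < -Real.log ρ₀ := by
    have := Real.log_neg hρ0 hρ₀
    linarith
  set L := -Real.log ρ₀ with hLdef
  rw [show ρ ^ b = (ρ ^ (-b))⁻¹ by rw [Real.rpow_neg hρ.le, inv_inv]]
  have hA : 1 + b * L ≤ ρ ^ (-b) := by
    have h1 : ρ₀ ^ (-b) ≤ ρ ^ (-b) := Real.rpow_le_rpow_of_nonpos hρ hρρ (by linarith)
    have h2 : 1 + b * L ≤ ρ₀ ^ (-b) := by
      rw [Real.rpow_def_of_pos hρ0]
      have := Real.add_one_le_exp (Real.log ρ₀ * -b)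
      rw [hLdef]; linarith
    linarith
  set A := ρ ^ (-b) with hAdef
  have h2B : (2 : ℝ) ^ b ≤ 2 ^ B := Real.rpow_le_rpow_of_exponent_le (by norm_num) hbB
  have h2b : (2 : ℝ) ^ b - 1 ≤ b * 2 ^ B := by
    have h1 : (2 : ℝ) ^ (-b) ≥ 1 - b := by
      rw [Real.rpow_def_of_pos (by norm_num)]
      have := Real.add_one_le_exp (Real.log 2 * -b)
      have h3 : Real.log 2 ≤ 1 := by
        have := Real.log_two_lt_d9; linarith
      nlinarith
    have h4 : (2 : ℝ) ^ b * 2 ^ (-b) = 1 := by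
      rw [← Real.rpow_add (by norm_num)]; simp
    have h5 : (0 : ℝ) < 2 ^ b := by positivity
    nlinarith
  have hbL : 0 < b * L := mul_pos hb hL
  have hA1 : 1 < A := by linarith
  have h2B0 : (0 : ℝ) < 2 ^ B := by positivity
  have hA0 : 0 < A := by linarith
  have key : (2 ^ b * A - 1) / (1 - A⁻¹) ≤ 2 ^ B * (1 + 1 / L) * A := by
    have h1 : 0 < 1 - A⁻¹ := by
      rw [sub_pos]; exact inv_lt_one_of_one_lt₀ hA1
    rw [div_le_iff₀ h1]
    have h2 : 2 ^ B * (1 + 1 / L) * A * (1 - A⁻¹) = 2 ^ B * (1 + 1 / L) * (A - 1) := by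
      field_simp
    rw [h2]
    have h3 : b * 2 ^ B ≤ 2 ^ B * (1 / L) * (A - 1) := by
      have : b ≤ 1 / L * (A - 1) := by
        rw [one_div, inv_mul_eq_div, le_div_iff₀ hL]; linarith
      nlinarith
    nlinarith
  have : 2 * (2 ^ b * A - 1) / (1 - A⁻¹) = 2 * ((2 ^ b * A - 1) / (1 - A⁻¹)) := by ring
  rw [this]
  nlinarith

/-- balanced energy estimate for minimizers of the non-scale-invariant
energies `E_{t,n/s}` on the sphere. -/
theorem stmt0 (n : ℕ) (hn : 1 ≤ n) (s s₀ ρ₀ : ℝ) (hs : 0 < s) (hss : s < s₀) (hs₀ : s₀ < 1)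
    (hρ₀ : 0 < ρ₀) (hρ₀' : ρ₀ < Real.sqrt (4 / 5)) :
    ∃ C : ℝ, 0 < C ∧
      ∀ (t : ℝ), s < t → t ≤ s₀ →
      ∀ (M : ℕ), 1 ≤ M →
      ∀ (N : Set (EuclideanSpace ℝ (Fin M))) (u : Sph n → EuclideanSpace ℝ (Fin M)),
        Continuous u → (∀ x, u x ∈ N) →
        sphEnergy n M t ((n : ℝ) / s) u < ⊤ →
        (∀ v : Sph n → EuclideanSpace ℝ (Fin M), Continuous v → (∀ x, v x ∈ N) →
            HomotopicIn N u v →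
            sphEnergy n M t ((n : ℝ) / s) u ≤ sphEnergy n M t ((n : ℝ) / s) v) →
        ∀ (y₀ : Sph n) (ρ : ℝ), 0 < ρ → ρ ≤ ρ₀ →
          (∫⁻ y in Metric.ball y₀ ρ,
              ∫⁻ x, sphKer n M ((n : ℝ) / s) ((n : ℝ) + t * ((n : ℝ) / s)) u x y
                ∂(sphMeasure n) ∂(sphMeasure n))
            ≤ ENNReal.ofReal (C * ρ ^ (-((n : ℝ) * (t / s - 1)))) *
              ∫⁻ y in (Metric.ball y₀ ρ)ᶜ,
                ∫⁻ x, sphKer n M ((n : ℝ) / s) ((n : ℝ) + t * ((n : ℝ) / s)) u x y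
                  ∂(sphMeasure n) ∂(sphMeasure n) := by
  have hn0 : (0 : ℝ) < n := by exact_mod_cast hn
  have hρ1 : ρ₀ < 1 := by
    refine hρ₀'.trans ?_
    rw [Real.sqrt_lt' one_pos]; norm_num
  have hL : 0 < -Real.log ρ₀ := by
    have := Real.log_neg hρ₀ hρ1
    linarith
  refine ⟨2 * (2 ^ ((n : ℝ) * (s₀ / s - 1)) * (1 + 1 / (-Real.log ρ₀))) + 1, by positivity, ?_⟩
  intro t hst ht M hM N u hu huN hfin hmin y₀ ρ hρ hρρ
  have := sphMeasure_sigmaFinite n hn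
  have hρlt : ρ < 1 := hρρ.trans_lt hρ1
  set b : ℝ := (n : ℝ) * (t / s - 1) with hb
  have hb0 : 0 < b := mul_pos hn0 (by rw [sub_pos, lt_div_iff₀ hs]; linarith)
  have hbB : b ≤ (n : ℝ) * (s₀ / s - 1) := by
    rw [hb]; gcongr
  set p : ℝ := (n : ℝ) / s with hp
  have hexp : ((n : ℝ) - t * p) / 2 = -(b / 2) := by
    rw [hb, hp]; ring
  set η : ℝ := Real.log (2 / ρ) with hη
  have hle := hmin (fun x => u (boost (-η) y₀ x)) (hu.comp (continuous_boost (-η) y₀))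
    (fun x => huN _) (by
      refine ⟨fun q => u (boost (-((q.1 : ℝ) * η)) y₀ q.2), ?_, fun q => huN _, ?_, ?_⟩
      · apply hu.comp
        exact (continuous_boost_joint y₀).comp
          (Continuous.prodMk (by fun_prop) continuous_snd)
      · intro x
        simp [boost_zero]
      · intro x
        simp)
  have hle2 := hle.trans (energy_boost_le t p η y₀ u)
  rw [hexp] at hle2
  have hpos : ∀ x, 0 < boostFac η y₀ x := boostFac_pos η y₀
  have hmeas : Measurable (Function.uncurry (sphKer n M p ((n : ℝ) + t * p) u)) := by
    have h1 : Measurable fun q : Sph n × Sph n => ‖u q.1 - u q.2‖ := by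
      have : Continuous fun q : Sph n × Sph n => ‖u q.1 - u q.2‖ := by fun_prop
      exact this.measurable
    have h2 : Measurable fun q : Sph n × Sph n => dist q.1 q.2 := continuous_dist.measurable
    exact ENNReal.measurable_ofReal.comp ((h1.pow_const _).div (h2.pow_const _))
  have hab := absorb (sphMeasure n) (sphKer n M p ((n : ℝ) + t * p) u)
    (fun x y => ENNReal.ofReal ((boostFac η y₀ x * boostFac η y₀ y) ^ (-(b / 2)))) hmeas
    (fun x y => by simp only [sphKer, norm_sub_rev (u x) (u y), dist_comm x y])
    (Metric.ball y₀ ρ) measurableSet_ball (ρ ^ b) (2 ^ b * ρ ^ (-b))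
    (by positivity) (Real.rpow_lt_one hρ.le hρlt hb0)
    (by
      have h1 : (1 : ℝ) ≤ 2 ^ b := Real.one_le_rpow (by norm_num) hb0.le
      have h2 : 1 ≤ ρ ^ (-b) :=
        Real.one_le_rpow_of_pos_of_le_one_of_nonpos hρ hρlt.le (by linarith)
      nlinarith)
    hfin hle2
    (by
      intro x hx y hy
      apply ENNReal.ofReal_le_ofReal
      have h1 := boostFac_lower_ball ρ hρ hρlt y₀ x hx
      have h2 := boostFac_lower_ball ρ hρ hρlt y₀ y hy
      have h3 : 1 / ρ * (1 / ρ) ≤ boostFac η y₀ x * boostFac η y₀ y :=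
        mul_le_mul h1 h2 (by positivity) (hpos x).le
      refine (Real.rpow_le_rpow_of_nonpos (by positivity) h3 (by linarith)).trans (le_of_eq ?_)
      rw [Real.mul_rpow (by positivity) (by positivity), ← Real.rpow_add (by positivity), one_div,
        Real.inv_rpow hρ.le, ← Real.rpow_neg hρ.le]
      congr 1; ring)
    (by
      intro x y
      apply ENNReal.ofReal_le_ofReal
      have h1 := boostFac_lower ρ hρ hρlt y₀ x
      have h2 := boostFac_lower ρ hρ hρlt y₀ y
      have h3 : ρ / 2 * (ρ / 2) ≤ boostFac η y₀ x * boostFac η y₀ y :=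
        mul_le_mul h1 h2 (by positivity) (hpos x).le
      refine (Real.rpow_le_rpow_of_nonpos (by positivity) h3 (by linarith)).trans (le_of_eq ?_)
      rw [Real.mul_rpow (by positivity) (by positivity), ← Real.rpow_add (by positivity),
        show -(b / 2) + -(b / 2) = -b by ring, Real.div_rpow hρ.le (by norm_num),
        Real.rpow_neg (by norm_num : (0 : ℝ) ≤ 2) b, div_inv_eq_mul, mul_comm])
  refine hab.trans ?_
  gcongr
  exact numeric_bound ρ₀ _ b ρ hρ1 hb0 hbB hρ hρρ
end
end

section
/- For every α > 1 there exists a constant C(α) > 0 (independent of the dimension) such that for every n ≥ 1, every R > 0, every λ ∈ (0,1) and all unit vectors θ, ω ∈ 𝕊^{n−1} ⊆ ℝⁿ: ∫_{λR}^{R} ∫_{λR}^{R} |rθ − ρω|^{−α} dr dρ ≤ C(α) · (1−λ) · λ^{1−α} · R · |Rθ − Rω|^{1−α}, where both sides are interpreted as values in [0,∞] (both sides equal ∞ when θ = ω). -/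
open MeasureTheory
open scoped ENNReal

noncomputable section

/-- Euclidean space `ℝᵏ`. -/
abbrev Euc (k : ℕ) : Type _ := EuclideanSpace ℝ (Fin k)

lemma aux_tail (α a : ℝ) (hα : 1 < α) (ha : 0 < a) :
    ∫⁻ t, (Set.Ioi a).indicator (fun t => ENNReal.ofReal (t ^ (-α))) t
      = ENNReal.ofReal (a ^ (1 - α) / (α - 1)) := by
  rw [lintegral_indicator measurableSet_Ioi,
    ← ofReal_integral_eq_lintegral_ofReal (integrableOn_Ioi_rpow_of_lt (by linarith) ha),
    integral_Ioi_rpow_of_lt (by linarith) ha]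
  · congr 1
    rw [show -α + 1 = -(α - 1) by ring, show 1 - α = -(α - 1) by ring, neg_div_neg_eq]
  · filter_upwards [ae_restrict_mem measurableSet_Ioi] with t ht
    exact Real.rpow_nonneg (ha.le.trans (le_of_lt ht)) _

lemma aux_kernel (α a : ℝ) (hα : 1 < α) (ha : 0 < a) :
    ∫⁻ t : ℝ, ENNReal.ofReal ((max |t| a) ^ (-α))
      ≤ ENNReal.ofReal (2 * α / (α - 1) * a ^ (1 - α)) := by
  have hα1 : 0 < α - 1 := by linarith
  have hm : Measurable ((Set.Ioi a).indicator (fun t : ℝ => ENNReal.ofReal (t ^ (-α)))) :=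
    Measurable.indicator (by fun_prop) measurableSet_Ioi
  set h := (Set.Ioi a).indicator (fun t : ℝ => ENNReal.ofReal (t ^ (-α))) with hh
  calc ∫⁻ t : ℝ, ENNReal.ofReal ((max |t| a) ^ (-α))
      ≤ ∫⁻ t : ℝ, ((Set.Icc (-a) a).indicator (fun _ => ENNReal.ofReal (a ^ (-α))) t
          + (h t + h (-t))) := by
        apply lintegral_mono
        intro t
        dsimp only
        by_cases ht : t ∈ Set.Icc (-a) a
        · rw [Set.indicator_of_mem ht, max_eq_right (abs_le.2 ht)]
          exact le_self_add
        · have h1 : a < |t| := by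
            by_contra hc
            exact ht (abs_le.1 (not_lt.1 hc))
          rw [max_eq_left h1.le, Set.indicator_of_notMem ht, zero_add]
          rcases le_total 0 t with h0 | h0
          · rw [abs_of_nonneg h0] at h1 ⊢
            rw [hh, Set.indicator_of_mem (show t ∈ Set.Ioi a from h1)]
            exact le_self_add
          · rw [abs_of_nonpos h0] at h1 ⊢
            rw [hh, Set.indicator_of_mem (show -t ∈ Set.Ioi a from h1)]
            exact le_add_self
    _ = ENNReal.ofReal (a ^ (-α)) * ENNReal.ofReal (a - -a)
          + (ENNReal.ofReal (a ^ (1 - α) / (α - 1)) + ENNReal.ofReal (a ^ (1 - α) / (α - 1))) := by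
        rw [lintegral_add_right _ (by fun_prop), lintegral_add_left hm,
          lintegral_neg_eq_self, hh, aux_tail α a hα ha,
          lintegral_indicator measurableSet_Icc, setLIntegral_const, Real.volume_Icc]
    _ ≤ _ := by
        have e : a ^ (1 - α) = a ^ (-α) * a := by
          rw [show 1 - α = -α + 1 by ring, Real.rpow_add ha, Real.rpow_one]
        have p : 0 < a ^ (-α) := Real.rpow_pos_of_pos ha _
        rw [← ENNReal.ofReal_mul p.le, ← ENNReal.ofReal_add (by positivity) (by positivity),
          ← ENNReal.ofReal_add (by have := mul_pos p ha; nlinarith) (by positivity)]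
        apply ENNReal.ofReal_le_ofReal
        rw [e]
        apply le_of_eq
        field_simp
        ring

/-- a two-dimensional radial integral estimate, uniform in the dimension:
`∫_{λR}^{R} ∫_{λR}^{R} |rθ − ρω|^{−α} dr dρ ≤ C(α) (1−λ) λ^{1−α} R |Rθ − Rω|^{1−α}`,
with both sides interpreted in `[0,∞]`. -/
theorem stmt4 (α : ℝ) (hα : 1 < α) :
    ∃ C : ℝ, 0 < C ∧
      ∀ (n : ℕ), 1 ≤ n → ∀ (R lam : ℝ), 0 < R → 0 < lam → lam < 1 →
      ∀ θ ω : Euc n, ‖θ‖ = 1 → ‖ω‖ = 1 →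
        (∫⁻ r in Set.Icc (lam * R) R, ∫⁻ ρ in Set.Icc (lam * R) R,
            (ENNReal.ofReal ‖r • θ - ρ • ω‖) ^ (-α))
          ≤ ENNReal.ofReal (C * (1 - lam) * lam ^ (1 - α) * R) *
              (ENNReal.ofReal ‖R • θ - R • ω‖) ^ (1 - α) := by
  have hα1 : 0 < α - 1 := by linarith
  refine ⟨2 * α / (α - 1), by positivity, ?_⟩
  intro n _ R lam hR hl hl1 θ ω hθ hω
  have hl2 : 0 < 1 - lam := by linarith
  have hlp : 0 < lam ^ (1 - α) := Real.rpow_pos_of_pos hl _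
  rw [← smul_sub, norm_smul, Real.norm_of_nonneg hR.le]
  rcases (norm_nonneg (θ - ω)).eq_or_lt with hd | hd
  · rw [← hd, mul_zero, ENNReal.ofReal_zero, ENNReal.zero_rpow_of_neg (by linarith),
      ENNReal.mul_top]
    · exact le_top
    · rw [Ne, ENNReal.ofReal_eq_zero, not_le]
      positivity
  set d := ‖θ - ω‖ with hdd
  have ha : 0 < lam * (R * d) := by positivity
  have key : ∀ r ∈ Set.Icc (lam * R) R, ∀ ρ ∈ Set.Icc (lam * R) R,
      (ENNReal.ofReal ‖r • θ - ρ • ω‖) ^ (-α)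
        ≤ ENNReal.ofReal ((max |ρ - r| (lam * (R * d))) ^ (-α)) := by
    intro r hr ρ hρ
    have hlR : 0 < lam * R := by positivity
    have h1 : ‖r • θ - ρ • ω‖ ^ 2 = (ρ - r) ^ 2 + r * ρ * d ^ 2 := by
      rw [hdd, @norm_sub_sq_real, @norm_sub_sq_real, norm_smul, norm_smul, hθ, hω,
        real_inner_smul_left, real_inner_smul_right, mul_one, mul_one, Real.norm_eq_abs,
        Real.norm_eq_abs, sq_abs, sq_abs]
      ring
    have h2 : (lam * R) * (lam * R) ≤ r * ρ :=
      mul_le_mul hr.1 hρ.1 hlR.le (hlR.le.trans hr.1)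
    have h3 : (lam * R) * (lam * R) * d ^ 2 ≤ r * ρ * d ^ 2 :=
      mul_le_mul_of_nonneg_right h2 (sq_nonneg d)
    have hN : max |ρ - r| (lam * (R * d)) ≤ ‖r • θ - ρ • ω‖ := by
      apply max_le
      · apply abs_le_of_sq_le_sq _ (norm_nonneg _)
        rw [h1]
        nlinarith [mul_pos hlR hlR, sq_nonneg d]
      · refine (pow_le_pow_iff_left₀ ha.le (norm_nonneg _) two_ne_zero).1 ?_
        rw [h1]
        nlinarith [sq_nonneg (ρ - r)]
    have hM : 0 < max |ρ - r| (lam * (R * d)) := lt_max_of_lt_right ha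
    rw [ENNReal.ofReal_rpow_of_pos (hM.trans_le hN)]
    exact ENNReal.ofReal_le_ofReal (Real.rpow_le_rpow_of_nonpos hM hN (by linarith))
  calc _ ≤ ∫⁻ r in Set.Icc (lam * R) R,
        ENNReal.ofReal (2 * α / (α - 1) * (lam * (R * d)) ^ (1 - α)) := by
        apply setLIntegral_mono measurable_const
        intro r hr
        calc _ ≤ ∫⁻ ρ in Set.Icc (lam * R) R,
              ENNReal.ofReal ((max |ρ - r| (lam * (R * d))) ^ (-α)) :=
              setLIntegral_mono' measurableSet_Icc (key r hr)
          _ ≤ ∫⁻ ρ, ENNReal.ofReal ((max |ρ - r| (lam * (R * d))) ^ (-α)) :=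
              setLIntegral_le_lintegral _ _
          _ = ∫⁻ t, ENNReal.ofReal ((max |t| (lam * (R * d))) ^ (-α)) :=
              lintegral_sub_right_eq_self
                (fun t => ENNReal.ofReal ((max |t| (lam * (R * d))) ^ (-α))) r
          _ ≤ _ := aux_kernel α _ hα ha
    _ = _ := by
        rw [setLIntegral_const, Real.volume_Icc, ENNReal.ofReal_rpow_of_pos (by positivity),
          ← ENNReal.ofReal_mul (by positivity), ← ENNReal.ofReal_mul (by positivity),
          Real.mul_rpow hl.le (by positivity)]
        congr 1
        ring
end
end
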